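/- There exist no elements a, b ∈ ℚ(i) such that a² − 5b² = i. Equivalently, i is not the relative norm N_{L/K}(z) = z·σ(z) of any element z of L = ℚ(i, √5) over K = ℚ(i), where σ is the nontrivial K-automorphism of L (sending √5 to −√5). -/

import Mathlib

theorem aux_mod : ∀ P Q D : ZMod 5, P ^ 2 - Q ^ 2 = 0 → 2 * P * Q = D ^ 2 →
    P = 0 ∧ Q = 0 ∧ D = 0 := by decide

theorem aux_mod2 : ∀ R S : ZMod 5, R ^ 2 - S ^ 2 = 0 → 2 * R * S = 0 →
    R = 0 ∧ S = 0 := by decide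

theorem aux_dvd (a : ℤ) (h : (a : ZMod 5) = 0) : ∃ b, a = 5 * b := by
  have := (ZMod.intCast_zmod_eq_zero_iff_dvd a 5).1 h
  exact_mod_cast this

theorem aux_descent (n : ℕ) : ∀ P Q R S D : ℤ, D.natAbs = n →
    P ^ 2 - Q ^ 2 = 5 * (R ^ 2 - S ^ 2) → 2 * P * Q - 10 * R * S = D ^ 2 → D = 0 := by
  induction n using Nat.strong_induction_on with
  | _ n ih =>
    intro P Q R S D hn h1 h2
    by_contra hD
    have h5 : (5 : ZMod 5) = 0 := by decide
    have h10 : (10 : ZMod 5) = 0 := by decide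
    have e1 := congrArg (Int.cast : ℤ → ZMod 5) h1
    have e2 := congrArg (Int.cast : ℤ → ZMod 5) h2
    push_cast at e1 e2
    rw [h5, zero_mul] at e1
    rw [h10, zero_mul, zero_mul, sub_zero] at e2
    obtain ⟨hP, hQ, hD'⟩ := aux_mod _ _ _ e1 e2
    obtain ⟨P, rfl⟩ := aux_dvd P hP
    obtain ⟨Q, rfl⟩ := aux_dvd Q hQ
    obtain ⟨D, rfl⟩ := aux_dvd D hD'
    have f1 : R ^ 2 - S ^ 2 = 5 * (P ^ 2 - Q ^ 2) := by linarith
    have f2 : 2 * R * S = 5 * (2 * P * Q - D ^ 2) := by linarith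
    have g1 := congrArg (Int.cast : ℤ → ZMod 5) f1
    have g2 := congrArg (Int.cast : ℤ → ZMod 5) f2
    push_cast at g1 g2
    rw [h5, zero_mul] at g1 g2
    obtain ⟨hR, hS⟩ := aux_mod2 _ _ g1 g2
    obtain ⟨R, rfl⟩ := aux_dvd R hR
    obtain ⟨S, rfl⟩ := aux_dvd S hS
    have := ih D.natAbs (by omega) P Q R S D rfl (by linarith) (by linarith)
    omega

/-- There are no elements `a = p + q·i` and `b = r + s·i` of `ℚ(i) ⊆ ℂ` with
`a² − 5b² = i`; i.e. `i` is not a relative norm from `ℚ(i,√5)` down to `ℚ(i)`. -/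
theorem stmt3 : ¬ ∃ p q r s : ℚ,
    ((p : ℂ) + (q : ℂ) * Complex.I) ^ 2 - 5 * ((r : ℂ) + (s : ℂ) * Complex.I) ^ 2
      = Complex.I := by
  rintro ⟨p, q, r, s, h⟩
  have hc : ((((p ^ 2 - q ^ 2 - 5 * (r ^ 2 - s ^ 2) : ℚ) : ℝ) : ℂ)
      + (((2 * p * q - 10 * r * s : ℚ) : ℝ) : ℂ) * Complex.I) = Complex.I := by
    push_cast
    linear_combination h + (-(q : ℂ) ^ 2 + 5 * (s : ℂ) ^ 2) * Complex.I_sq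
  have hre := congrArg Complex.re hc
  have him := congrArg Complex.im hc
  simp only [Complex.add_re, Complex.add_im, Complex.re_ofReal_mul, Complex.im_ofReal_mul,
    Complex.ofReal_re, Complex.ofReal_im, Complex.I_re, Complex.I_im, mul_zero, mul_one,
    add_zero, zero_add] at hre him
  have hre' : p ^ 2 - q ^ 2 - 5 * (r ^ 2 - s ^ 2) = 0 := by exact_mod_cast hre
  have him' : 2 * p * q - 10 * r * s = 1 := by exact_mod_cast him
  have hp := Rat.mul_den_eq_num p
  have hq := Rat.mul_den_eq_num q
  have hr := Rat.mul_den_eq_num r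
  have hs := Rat.mul_den_eq_num s
  have key := aux_descent _ (p.num * (q.den * r.den * s.den)) (q.num * (p.den * r.den * s.den))
    (r.num * (p.den * q.den * s.den)) (s.num * (p.den * q.den * r.den))
    (p.den * q.den * r.den * s.den) rfl
    (by
      have : ((p.num * (q.den * r.den * s.den) : ℚ)) ^ 2 - (q.num * (p.den * r.den * s.den)) ^ 2
          = 5 * ((r.num * (p.den * q.den * s.den)) ^ 2
            - (s.num * (p.den * q.den * r.den)) ^ 2) := by
        rw [← hp, ← hq, ← hr, ← hs]
        linear_combination ((p.den : ℚ) * q.den * r.den * s.den) ^ 2 * hre'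
      exact_mod_cast this)
    (by
      have : 2 * (p.num * (q.den * r.den * s.den) : ℚ) * (q.num * (p.den * r.den * s.den))
          - 10 * (r.num * (p.den * q.den * s.den)) * (s.num * (p.den * q.den * r.den))
          = (p.den * q.den * r.den * s.den) ^ 2 := by
        rw [← hp, ← hq, ← hr, ← hs]
        linear_combination ((p.den : ℚ) * q.den * r.den * s.den) ^ 2 * him'
      exact_mod_cast this)
  have h1 := p.den_nz
  have h2 := q.den_nz
  have h3 := r.den_nz
  have h4 := s.den_nz
  simp_all
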